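/- Let ℓ be Lebesgue measure and δ the counting measure on the Borel σ-algebra of ℝ. A Borel set B ⊆ ℝ² is σ-finite with respect to the product measure ℓ⊗δ if and only if B = ⋃_{n∈ℕ} A_n × {a_n} for some Borel sets A_n ⊆ ℝ and points a_n ∈ ℝ. -/

import Mathlib

open Set ENNReal

/-- A family of sets is a σ-ring if it contains `∅` and is closed under
set differences and countable unions. -/
def IsSigmaRing {α : Type*} (C : Set (Set α)) : Prop :=
  ∅ ∈ C ∧ (∀ A B : Set α, A ∈ C → B ∈ C → A \ B ∈ C) ∧
    ∀ f : ℕ → Set α, (∀ n, f n ∈ C) → (⋃ n, f n) ∈ C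

/-- The σ-ring generated by a family of sets. -/
def genSR {α : Type*} (D : Set (Set α)) : Set (Set α) :=
  ⋂₀ {C | IsSigmaRing C ∧ D ⊆ C}

/-- A measure on a σ-ring: countably additive, vanishing on `∅`. -/
def IsMeasure {α : Type*} (C : Set (Set α)) (μ : Set α → ℝ≥0∞) : Prop :=
  μ ∅ = 0 ∧ ∀ f : ℕ → Set α, (∀ n, f n ∈ C) →
    Pairwise (Function.onFun Disjoint f) → μ (⋃ n, f n) = ∑' n, μ (f n)

/-- The family of μ-σ-finite sets: countable unions of sets of finite measure. -/
def sigmaFin {α : Type*} (C : Set (Set α)) (μ : Set α → ℝ≥0∞) : Set (Set α) :=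
  {A | ∃ g : ℕ → Set α, (∀ n, g n ∈ C ∧ μ (g n) < ⊤) ∧ A = ⋃ n, g n}

/-- Restriction of a family of sets to a set `S`. -/
def restrictFam {α : Type*} (D : Set (Set α)) (S : Set α) : Set (Set α) :=
  (fun A => A ∩ S) '' D

/-- The product σ-ring, generated by measurable rectangles. -/
def prodSR {α β : Type*} (S : Set (Set α)) (T : Set (Set β)) : Set (Set (α × β)) :=
  genSR {R | ∃ A ∈ S, ∃ B ∈ T, R = A ×ˢ B}

/-- The σ-algebra generated by a family of sets. -/
def genSA {α : Type*} (D : Set (Set α)) : MeasurableSpace α :=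
  MeasurableSpace.generateFrom D

/-- The (extended) Lebesgue integral of a nonnegative function with respect to a
measure on a σ-ring, as the supremum of integrals of simple functions below it. -/
noncomputable def lintSR {α : Type*} (C : Set (Set α)) (μ : Set α → ℝ≥0∞)
    (f : α → ℝ≥0∞) : ℝ≥0∞ :=
  ⨆ (n : ℕ) (c : Fin n → ℝ≥0∞) (A : Fin n → Set α) (_ : ∀ i, A i ∈ C)
    (_ : ∀ x, (∑ i, (A i).indicator (fun _ => c i) x) ≤ f x),
    ∑ i, c i * μ (A i)

/-- The positive part of an extended real, as an `ℝ≥0∞`. -/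
noncomputable def epos (x : EReal) : ℝ≥0∞ := (x ⊔ 0).abs

/-- Measurability of an extended-real function with respect to a σ-ring:
measurable for the generated σ-algebra, with support in the σ-ring. -/
def SRMeasurableE {α : Type*} (C : Set (Set α)) (f : α → EReal) : Prop :=
  @Measurable α EReal (genSA C) _ f ∧ {x | f x ≠ 0} ∈ C

/-- The Lebesgue integral of an extended-real function w.r.t. a measure on a σ-ring. -/
noncomputable def integralE {α : Type*} (C : Set (Set α)) (μ : Set α → ℝ≥0∞)
    (f : α → EReal) : EReal :=
  ((lintSR C μ fun x => epos (f x) : ℝ≥0∞) : EReal) -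
    ((lintSR C μ fun x => epos (-f x) : ℝ≥0∞) : EReal)

/-- Integrability of an extended-real function w.r.t. a measure on a σ-ring. -/
def IntegrableE {α : Type*} (C : Set (Set α)) (μ : Set α → ℝ≥0∞)
    (f : α → EReal) : Prop :=
  SRMeasurableE C f ∧ lintSR C μ (fun x => (f x).abs) < ⊤

/-- `lam` is the product of the measures `μ` and `ν` on σ-rings `S`, `T`:
the unique measure on the product σ-ring whose σ-finite component is the Halmos
product of the σ-finite components. -/
def IsProdMeasure {α β : Type*} (S : Set (Set α)) (T : Set (Set β))
    (μ : Set α → ℝ≥0∞) (ν : Set β → ℝ≥0∞) (lam : Set (α × β) → ℝ≥0∞) : Prop :=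
  IsMeasure (prodSR S T) lam ∧
  (∀ A ∈ S, ∀ B ∈ T, μ A < ⊤ → ν B < ⊤ → lam (A ×ˢ B) = μ A * ν B) ∧
  sigmaFin (prodSR S T) lam =
    genSR {R | ∃ A ∈ S, ∃ B ∈ T, μ A < ⊤ ∧ ν B < ⊤ ∧ R = A ×ˢ B}

theorem isSigmaRing_genSR {α : Type*} (D : Set (Set α)) : IsSigmaRing (genSR D) :=
  ⟨fun _ hC => hC.1.1, fun _ _ hA hB C hC => hC.1.2.1 _ _ (hA C hC) (hB C hC),
    fun _ hf C hC => hC.1.2.2 _ fun n => hf n C hC⟩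

theorem subset_genSR {α : Type*} (D : Set (Set α)) : D ⊆ genSR D :=
  fun _ hA _ hC => hC.2 hA

/-- The sets with measurable horizontal sections, only countably many of them nonempty,
form a σ-ring. -/
theorem isSigmaRing_countable_image_snd {α β : Type*} [MeasurableSpace α] :
    IsSigmaRing {E : Set (α × β) |
      (∀ y, MeasurableSet {x | (x, y) ∈ E}) ∧ (Prod.snd '' E).Countable} := by
  refine ⟨by simp, ?_, ?_⟩
  · rintro E F ⟨hE, hE'⟩ ⟨hF, -⟩
    exact ⟨fun y => (hE y).diff (hF y), hE'.mono (image_mono sdiff_subset)⟩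
  · intro f hf
    refine ⟨fun y => ?_, ?_⟩
    · simp only [mem_iUnion, ofPred_exists]
      exact MeasurableSet.iUnion fun n => (hf n).1 y
    · rw [image_iUnion]
      exact countable_iUnion fun n => (hf n).2

theorem exists_eq_iUnion_prod_singleton {α β : Type*} [MeasurableSpace α] [Nonempty β]
    {E : Set (α × β)} (hE : ∀ y, MeasurableSet {x | (x, y) ∈ E})
    (hc : (Prod.snd '' E).Countable) :
    ∃ A : ℕ → Set α, ∃ a : ℕ → β, (∀ n, MeasurableSet (A n)) ∧
      E = ⋃ n, A n ×ˢ ({a n} : Set β) := by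
  obtain ⟨a, ha⟩ := countable_iff_exists_subset_range.1 hc
  refine ⟨fun n => {x | (x, a n) ∈ E}, a, fun n => hE _, ?_⟩
  ext ⟨x, y⟩
  simp only [mem_iUnion, mem_prod, mem_ofPred_eq, mem_singleton_iff]
  constructor
  · intro h
    obtain ⟨n, rfl⟩ := ha ⟨_, h, rfl⟩
    exact ⟨n, h, rfl⟩
  · rintro ⟨n, h, rfl⟩
    exact h

/-- The σ-ring generated by rectangles with finite-measure sides, for a σ-finite measure and
counting measure, consists of the countable unions of measurable sets times points. -/
theorem mem_genSR_prod_count_iff {α β : Type*} [MeasurableSpace α] [MeasurableSpace β]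
    [MeasurableSingletonClass β] [Nonempty β] (μ : MeasureTheory.Measure α)
    [MeasureTheory.SigmaFinite μ] {E : Set (α × β)} :
    E ∈ genSR {R | ∃ A ∈ {A : Set α | MeasurableSet A}, ∃ B ∈ {B : Set β | MeasurableSet B},
        μ A < ⊤ ∧ MeasureTheory.Measure.count B < ⊤ ∧ R = A ×ˢ B} ↔
      ∃ A : ℕ → Set α, ∃ a : ℕ → β, (∀ n, MeasurableSet (A n)) ∧
        E = ⋃ n, A n ×ˢ ({a n} : Set β) := by
  constructor
  · intro hE
    obtain ⟨hm, hc⟩ := hE _ ⟨isSigmaRing_countable_image_snd, by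
      rintro _ ⟨A, hA, B, -, -, hB, rfl⟩
      refine ⟨fun y => ?_, (MeasureTheory.Measure.count_apply_lt_top.1 hB).countable.mono
        (snd_image_prod_subset A B)⟩
      by_cases hy : y ∈ B
      · simpa [hy] using hA
      · simp [hy]⟩
    exact exists_eq_iUnion_prod_singleton hm hc
  · rintro ⟨A, a, hA, rfl⟩
    refine (isSigmaRing_genSR _).2.2 _ fun n => ?_
    have h : A n ×ˢ ({a n} : Set β) =
        ⋃ k, (A n ∩ MeasureTheory.spanningSets μ k) ×ˢ ({a n} : Set β) := by
      rw [← iUnion_prod_const, ← inter_iUnion, MeasureTheory.iUnion_spanningSets, inter_univ]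
    rw [h]
    refine (isSigmaRing_genSR _).2.2 _ fun k => subset_genSR _
      ⟨_, (hA n).inter (MeasureTheory.measurableSet_spanningSets μ k), _,
        measurableSet_singleton (a n), ?_, by simp, rfl⟩
    exact (MeasureTheory.measure_mono inter_subset_right).trans_lt
      (MeasureTheory.measure_spanningSets_lt_top μ k)

/-- a Borel set of the plane is σ-finite for the product of
Lebesgue measure and counting measure iff it is a countable union of sets
`Aₙ × {aₙ}` with `Aₙ` Borel. -/
theorem stmt_13
    (lam : Set (ℝ × ℝ) → ℝ≥0∞)
    (hlam : IsProdMeasure {A : Set ℝ | MeasurableSet A} {B : Set ℝ | MeasurableSet B}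
      (fun A => MeasureTheory.volume A) (fun B => MeasureTheory.Measure.count B) lam)
    (B : Set (ℝ × ℝ))
    (hB : B ∈ prodSR {A : Set ℝ | MeasurableSet A} {B : Set ℝ | MeasurableSet B}) :
    B ∈ sigmaFin (prodSR {A : Set ℝ | MeasurableSet A} {B : Set ℝ | MeasurableSet B}) lam ↔
      ∃ A : ℕ → Set ℝ, ∃ a : ℕ → ℝ, (∀ n, MeasurableSet (A n)) ∧
        B = ⋃ n, A n ×ˢ ({a n} : Set ℝ) := by
  rw [hlam.2.2]
  exact mem_genSR_prod_count_iff MeasureTheory.volume
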